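/- Let R be a Noetherian commutative ring, S = R[x_1,...,x_n] the polynomial ring over R, k an integer with 0 ≤ k < n, and J = (I_1 x_1, ..., I_k x_k, {x_i x_j : 1 ≤ i < j ≤ n}) ⊆ S, where I_1,...,I_k are ideals of R. Then the element x = x_1 + x_2 + ... + x_n is a non-zerodivisor on S/J. -/

import Mathlib

set_option maxHeartbeats 1000000
set_option synthInstance.maxHeartbeats 400000

open MvPolynomial

/-!
Modulo the products `x_i x_j`, a polynomial is determined by its restrictions `f_i(t)` to the
coordinate axes, which share their constant term. In these terms `f ∈ J` says that `f` has
constant term zero and that every `f_i` has its coefficients in `I_i`, where `I_i = 0` for `i > k`.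
The sum of the variables restricts to `t` on each axis, and multiplication by `t` only shifts
coefficients, so `x f ∈ J` puts the coefficients of each `f_i` in `I_i`. In particular the constant
term of `f` lies in `⋂ I_i`, which vanishes because `k < n`.
-/

section AxisRestriction

variable {R σ : Type*} [CommSemiring R] [DecidableEq σ]

/-- Restriction of a polynomial to the `i`-th coordinate axis: the variable `X i` becomes the
variable of `R[X]`, and all other variables become zero. -/
noncomputable def axisRestriction (i : σ) : MvPolynomial σ R →ₐ[R] Polynomial R :=
  aeval (Pi.single i Polynomial.X)

theorem axisRestriction_X_self (i : σ) :
    axisRestriction i (X i : MvPolynomial σ R) = Polynomial.X := by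
  simp only [axisRestriction, aeval_X, Pi.single_eq_same]

theorem axisRestriction_X_of_ne {i j : σ} (h : j ≠ i) :
    axisRestriction i (X j : MvPolynomial σ R) = 0 := by
  simp only [axisRestriction, aeval_X, Pi.single_eq_of_ne h]

theorem axisRestriction_C (i : σ) (a : R) :
    axisRestriction i (C a : MvPolynomial σ R) = Polynomial.C a :=
  (axisRestriction i).commutes a

theorem axisRestriction_sum_X [Fintype σ] (i : σ) :
    axisRestriction i (∑ j, X j : MvPolynomial σ R) = Polynomial.X := by
  rw [map_sum, Fintype.sum_eq_single i fun j hj => axisRestriction_X_of_ne hj,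
    axisRestriction_X_self]

theorem coeff_axisRestriction (i : σ) (f : MvPolynomial σ R) (m : ℕ) :
    (axisRestriction i f).coeff m = coeff (Finsupp.single i m) f := by
  induction f using MvPolynomial.induction_on generalizing m with
  | C a =>
    rw [axisRestriction_C, Polynomial.coeff_C, coeff_C]
    simp only [eq_comm (a := (0 : σ →₀ ℕ)), Finsupp.single_eq_zero]
  | add p q hp hq => rw [map_add, Polynomial.coeff_add, coeff_add, hp, hq]
  | mul_X p j hp =>
    rw [map_mul, coeff_mul_X']
    by_cases hj : j = i
    · subst hj
      rw [axisRestriction_X_self]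
      cases m with
      | zero => simp
      | succ m => simp [hp, Finsupp.single_add]
    · simp [axisRestriction_X_of_ne hj, Ne.symm hj]

end AxisRestriction

theorem X_mul_mem_map_C_iff {R : Type*} [CommSemiring R] {I : Ideal R} {p : Polynomial R} :
    Polynomial.X * p ∈ I.map Polynomial.C ↔ p ∈ I.map Polynomial.C := by
  refine ⟨fun h => Ideal.mem_map_C_iff.2 fun m => ?_, Ideal.mul_mem_left _ _⟩
  simpa only [Polynomial.coeff_X_mul] using Ideal.mem_map_C_iff.1 h (m + 1)

section AxesIdeal

variable {R σ : Type*} [CommSemiring R] {L : σ → Ideal R}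

/-- The ideal `(L_i x_i, x_i x_j : i ≠ j)`, which cuts out a thickening of the coordinate axes.
Setting `L_i = I_i` for `i ≤ k` and `L_i = 0` for `i > k` gives the ideal `J` of the theorem. -/
noncomputable def axesIdeal (L : σ → Ideal R) : Ideal (MvPolynomial σ R) :=
  Ideal.span ({p | ∃ (i : σ) (a : R), a ∈ L i ∧ p = C a * X i} ∪
    {p | ∃ i j : σ, i ≠ j ∧ p = X i * X j})

theorem axesIdeal_le_iff {K : Ideal (MvPolynomial σ R)} :
    axesIdeal L ≤ K ↔ (∀ i, ∀ a ∈ L i, C a * X i ∈ K) ∧ ∀ i j, i ≠ j → X i * X j ∈ K := by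
  rw [axesIdeal, Ideal.span_le, Set.union_subset_iff]
  refine and_congr ⟨fun h i a ha => h ⟨i, a, ha, rfl⟩, ?_⟩ ⟨fun h i j hij => h ⟨i, j, hij, rfl⟩, ?_⟩
  · rintro h _ ⟨i, a, ha, rfl⟩
    exact h i a ha
  · rintro h _ ⟨i, j, hij, rfl⟩
    exact h i j hij

theorem C_mul_X_mem_axesIdeal {i : σ} {a : R} (ha : a ∈ L i) : C a * X i ∈ axesIdeal L :=
  (axesIdeal_le_iff.1 le_rfl).1 i a ha

theorem X_mul_X_mem_axesIdeal {i j : σ} (h : i ≠ j) : X i * X j ∈ axesIdeal L :=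
  (axesIdeal_le_iff.1 le_rfl).2 i j h

theorem monomial_mem_axesIdeal {s : σ →₀ ℕ} {a : R} (hs : s ≠ 0)
    (ha : ∀ i m, s = Finsupp.single i m → a ∈ L i) : monomial s a ∈ axesIdeal L := by
  classical
  obtain ⟨i, hi⟩ := Finsupp.ne_iff.1 hs
  have hsplit : s = Finsupp.single i (s i) + s.erase i := (Finsupp.single_add_erase i s).symm
  by_cases h : s.erase i = 0
  · rw [h, add_zero] at hsplit
    refine Ideal.mem_of_dvd _ ?_ (C_mul_X_mem_axesIdeal (ha i _ hsplit))
    rw [hsplit, ← C_mul_X_pow_eq_monomial]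
    exact mul_dvd_mul_left _ (dvd_pow_self _ hi)
  · obtain ⟨j, hj⟩ := Finsupp.ne_iff.1 h
    have hij : i ≠ j := by
      rintro rfl
      exact hj Finsupp.erase_same
    refine Ideal.mem_of_dvd _ ?_ (X_mul_X_mem_axesIdeal hij)
    rw [hsplit, ← one_mul a, ← monomial_mul]
    refine mul_dvd_mul (X_dvd_monomial.2 (.inr ?_)) (X_dvd_monomial.2 (.inr hj))
    rwa [Finsupp.single_eq_same]

theorem mem_axesIdeal_iff [DecidableEq σ] {f : MvPolynomial σ R} :
    f ∈ axesIdeal L ↔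
      constantCoeff f = 0 ∧ ∀ i, axisRestriction i f ∈ (L i).map Polynomial.C := by
  constructor
  · intro hf
    have h_const : axesIdeal L ≤ RingHom.ker constantCoeff :=
      axesIdeal_le_iff.2 ⟨fun i a _ => by simp [RingHom.mem_ker],
        fun i j _ => by simp [RingHom.mem_ker]⟩
    have h_axis (i : σ) : axesIdeal L ≤ ((L i).map Polynomial.C).comap (axisRestriction i) := by
      refine axesIdeal_le_iff.2 ⟨fun j a ha => ?_, fun j l hjl => ?_⟩ <;>
        rw [Ideal.mem_comap, map_mul]
      · obtain rfl | hj := eq_or_ne j i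
        · rw [axisRestriction_C]
          exact Ideal.mul_mem_right _ _ (Ideal.mem_map_of_mem _ ha)
        · rw [axisRestriction_X_of_ne hj, mul_zero]
          exact zero_mem _
      · obtain rfl | hj := eq_or_ne j i
        · rw [axisRestriction_X_of_ne hjl.symm, mul_zero]
          exact zero_mem _
        · rw [axisRestriction_X_of_ne hj, zero_mul]
          exact zero_mem _
    exact ⟨h_const hf, fun i => h_axis i hf⟩
  · rintro ⟨h_const, h_axis⟩
    rw [f.as_sum]
    refine Ideal.sum_mem _ fun s hs => monomial_mem_axesIdeal ?_ ?_
    · rintro rfl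
      exact mem_support_iff.1 hs h_const
    · rintro i m rfl
      rw [← coeff_axisRestriction]
      exact Ideal.mem_map_C_iff.1 (h_axis i) m

theorem sum_X_mul_mem_axesIdeal_iff [Fintype σ] [DecidableEq σ] {f : MvPolynomial σ R} :
    (∑ i, X i) * f ∈ axesIdeal L ↔ ∀ i, axisRestriction i f ∈ (L i).map Polynomial.C := by
  have h_const : constantCoeff ((∑ i, X i) * f) = 0 := by
    simp only [map_mul, map_sum, constantCoeff_X, Finset.sum_const_zero, zero_mul]
  simp only [mem_axesIdeal_iff, h_const, true_and, map_mul, axisRestriction_sum_X,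
    X_mul_mem_map_C_iff]

theorem sum_vars_nonzerodivisor_general [Fintype σ] (hL : ⨅ i, L i = ⊥) (f : MvPolynomial σ R)
    (hf : (∑ i, X i) * f ∈ axesIdeal L) : f ∈ axesIdeal L := by
  classical
  have h_axis := sum_X_mul_mem_axesIdeal_iff.1 hf
  have h_const : constantCoeff f ∈ ⨅ i, L i := Ideal.mem_iInf.2 fun i => by
    have h := Ideal.mem_map_C_iff.1 (h_axis i) 0
    rwa [coeff_axisRestriction, Finsupp.single_zero] at h
  rw [hL, Ideal.mem_bot] at h_const
  exact mem_axesIdeal_iff.2 ⟨h_const, h_axis⟩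

theorem axesIdeal_extend_bot [LinearOrder σ] {ι : Type*} {e : ι → σ} (he : e.Injective)
    (I : ι → Ideal R) :
    axesIdeal (Function.extend e I ⊥) =
      Ideal.span ({p | ∃ (i : ι) (a : R), a ∈ I i ∧ p = C a * X (e i)} ∪
        {p | ∃ i j : σ, i < j ∧ p = X i * X j}) := by
  apply le_antisymm
  · refine axesIdeal_le_iff.2 ⟨fun j a ha => ?_, fun i j hij => ?_⟩
    · by_cases hj : ∃ i, e i = j
      · obtain ⟨i, rfl⟩ := hj
        rw [he.extend_apply] at ha
        exact Ideal.subset_span (.inl ⟨i, a, ha, rfl⟩)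
      · rw [Function.extend_apply' _ _ _ hj, Pi.bot_apply, Ideal.mem_bot] at ha
        rw [ha, C_0, zero_mul]
        exact zero_mem _
    · obtain h | h := hij.lt_or_gt
      · exact Ideal.subset_span (.inr ⟨i, j, h, rfl⟩)
      · exact Ideal.subset_span (.inr ⟨j, i, h, mul_comm _ _⟩)
  · rw [Ideal.span_le]
    rintro _ (⟨i, a, ha, rfl⟩ | ⟨i, j, hij, rfl⟩)
    · exact C_mul_X_mem_axesIdeal (by rwa [he.extend_apply])
    · exact X_mul_X_mem_axesIdeal hij.ne

end AxesIdeal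

theorem iInf_extend_bot_of_not_surjective {ι σ α : Type*} [CompleteLattice α] {e : ι → σ}
    (he : ¬ e.Surjective) (g : ι → α) : ⨅ i, Function.extend e g ⊥ i = ⊥ := by
  obtain ⟨j, hj⟩ := not_forall.1 he
  exact le_bot_iff.1 ((iInf_le _ j).trans_eq (Function.extend_apply' _ _ _ hj))

theorem not_surjective_castLE {n k : ℕ} (hk : k < n) :
    ¬ (Fin.castLE hk.le).Surjective := fun h =>
  hk.not_ge (Fin.le_of_surjective _ h)

/-- Let `R` be Noetherian, `S = R[x_1,…,x_n]`, `0 ≤ k < n`, and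
`J = (I_1 x_1, …, I_k x_k, {x_i x_j : 1 ≤ i < j ≤ n})` where `I_1,…,I_k` are ideals of `R`.
Then `x = x_1 + ⋯ + x_n` is a non-zerodivisor on `S/J`. -/
theorem sum_vars_nonzerodivisor {R : Type*} [CommRing R] [IsNoetherianRing R]
    {n k : ℕ} (hk : k < n) (I : Fin k → Ideal R)
    (J : Ideal (MvPolynomial (Fin n) R))
    (hJ : J = Ideal.span
      ({p | ∃ (i : Fin k) (a : R), a ∈ I i ∧ p = C a * X (Fin.castLE hk.le i)} ∪
       {p | ∃ i j : Fin n, i < j ∧ p = X i * X j})) :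
    ∀ f : MvPolynomial (Fin n) R, (∑ i : Fin n, X i) * f ∈ J → f ∈ J := by
  rw [hJ, ← axesIdeal_extend_bot (Fin.castLE_injective hk.le)]
  exact sum_vars_nonzerodivisor_general
    (iInf_extend_bot_of_not_surjective (not_surjective_castLE hk) I)
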